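/- arXiv:1504.07661 — 2 statements merged into one kernel-verified Lean document; each statement's English description precedes it below -/
import Mathlib

section
/- (Lemma 2) Let p, p' ∈ ℤ² with p.x ≤ p'.x and let ≺, ≺' be linear orders on ℤ. There exists a point p₃ ∈ Q¹_p ∩ Q¹_{p'} that has a conflicting priority with respect to (≺,p) and (≺',p') if and only if some integers a ≠ b form a bad pair for (≺,p) and (≺',p'). -/
open scoped Classical

/-- Points of the digital plane. -/
abbrev Pt : Type := ℤ × ℤ

/-- `q` lies in the closed first quadrant of `p`. -/
def Quad1 (p q : Pt) : Prop := p.1 ≤ q.1 ∧ p.2 ≤ q.2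

/-- The number of elements `y` of the finite set `J` with `y ≺ x` or `y = x`. -/
noncomputable def rankLE (lt : ℤ → ℤ → Prop) (J : Finset ℤ) (x : ℤ) : ℤ :=
  ((J.filter fun y => lt y x ∨ y = x).card : ℤ)

/-- `x` is among the `k` smallest elements of `J` with respect to the linear order `lt`. -/
def AmongSmallest (lt : ℤ → ℤ → Prop) (J : Finset ℤ) (k x : ℤ) : Prop :=
  x ∈ J ∧ rankLE lt J x ≤ k

/-- The interval `I(p,q) = [p.x+p.y, q.x+q.y-1]`. -/
noncomputable def Ival (p q : Pt) : Finset ℤ := Finset.Icc (p.1 + p.2) (q.1 + q.2 - 1)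

/-- Membership in `H(lt,p,q)`: the `q.x - p.x` smallest elements of `I(p,q)` w.r.t. `lt`. -/
def Hmem (lt : ℤ → ℤ → Prop) (p q : Pt) (a : ℤ) : Prop :=
  AmongSmallest lt (Ival p q) (q.1 - p.1) a

/-- The digital segment `R(lt,p,q)` for `q ∈ Q¹_p`, generated by the linear order `lt`. -/
noncomputable def seg (lt : ℤ → ℤ → Prop) (p q : Pt) : Set Pt :=
  {r : Pt | p.1 ≤ r.1 ∧ r.1 ≤ q.1 ∧ p.2 ≤ r.2 ∧ r.2 ≤ q.2 ∧
    p.1 + p.2 ≤ r.1 + r.2 ∧ r.1 + r.2 ≤ q.1 + q.2 ∧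
    r.1 - p.1 =
      (((Finset.Icc (p.1 + p.2) (r.1 + r.2 - 1)).filter fun a => Hmem lt p q a).card : ℤ)}

/-- `(t₁,t₂)` is a witness to the violation of (S3) for the pair of sets `(S,S')`. -/
def Witness (S S' : Set Pt) (t₁ t₂ : Pt) : Prop :=
  t₁ ∈ S ∧ t₁ ∈ S' ∧ t₂ ∈ S ∧ t₂ ∈ S' ∧
  t₁.1 + t₁.2 < t₂.1 + t₂.2 ∧
  ((t₁.1 + 1, t₁.2) : Pt) ∈ S ∧ ((t₁.1, t₁.2 + 1) : Pt) ∈ S' ∧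
  ((t₂.1, t₂.2 - 1) : Pt) ∈ S ∧ ((t₂.1 - 1, t₂.2) : Pt) ∈ S'

/-- `a ≠ b` form a bad pair for `(lt,p)` and `(lt',p')`, where `p.x ≤ p'.x`. -/
def BadPair (lt lt' : ℤ → ℤ → Prop) (p p' : Pt) (a b : ℤ) : Prop :=
  a ≠ b ∧ ∃ C ℓ : ℤ, p.1 + p.2 ≤ C ∧ p'.1 + p'.2 ≤ C ∧
    a ∈ Finset.Icc (p.1 + p.2) (C - 1) ∧ b ∈ Finset.Icc (p.1 + p.2) (C - 1) ∧
    a ∈ Finset.Icc (p'.1 + p'.2) (C - 1) ∧ b ∈ Finset.Icc (p'.1 + p'.2) (C - 1) ∧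
    AmongSmallest lt (Finset.Icc (p.1 + p.2) (C - 1)) ℓ a ∧
    ¬ AmongSmallest lt (Finset.Icc (p.1 + p.2) (C - 1)) ℓ b ∧
    AmongSmallest lt' (Finset.Icc (p'.1 + p'.2) (C - 1)) (ℓ - (p'.1 - p.1)) b ∧
    ¬ AmongSmallest lt' (Finset.Icc (p'.1 + p'.2) (C - 1)) (ℓ - (p'.1 - p.1)) a

/-- Bad pair for arbitrary `p, p'`: for `p.x > p'.x` the roles of `p` and `p'` are exchanged. -/
def BadPairSym (lt lt' : ℤ → ℤ → Prop) (p p' : Pt) (a b : ℤ) : Prop :=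
  (p.1 ≤ p'.1 ∧ BadPair lt lt' p p' a b) ∨ (p'.1 ≤ p.1 ∧ BadPair lt' lt p' p a b)

/-- Adjacency in the unit grid graph on `ℤ²`. -/
def GridAdj (u v : Pt) : Prop := |u.1 - v.1| + |u.2 - v.2| = 1

/-- `S` is the vertex set of a path from `p` to `q` in the unit grid graph. -/
def IsGridPath (S : Set Pt) (p q : Pt) : Prop :=
  ∃ (n : ℕ) (f : ℕ → Pt), f 0 = p ∧ f n = q ∧
    (∀ i, i < n → GridAdj (f i) (f (i + 1))) ∧
    (∀ i j, i ≤ n → j ≤ n → f i = f j → i = j) ∧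
    S = {r : Pt | ∃ i, i ≤ n ∧ f i = r}

/-- The pair `p, q` has nonnegative slope. -/
def NonnegPair (p q : Pt) : Prop := (p.1 ≤ q.1 ∧ p.2 ≤ q.2) ∨ (q.1 ≤ p.1 ∧ q.2 ≤ p.2)

/-- A nonnegative-slope digital segment system `R` is a CDS: properties (S1)-(S5). -/
def IsCDS (R : Pt → Pt → Set Pt) : Prop :=
  ∀ p q : Pt, NonnegPair p q →
    IsGridPath (R p q) p q ∧
    R p q = R q p ∧
    (∀ r s : Pt, r ∈ R p q → s ∈ R p q → NonnegPair r s → R r s ⊆ R p q) ∧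
    (∃ r : Pt, r ∉ R p q ∧ NonnegPair p r ∧ R p q ⊆ R p r) ∧
    (p.1 = q.1 → ∀ r ∈ R p q, r.1 = p.1) ∧
    (p.2 = q.2 → ∀ r ∈ R p q, r.2 = p.2)

/-- The nonnegative-slope digital segment system generated by an assignment of
linear orders to the points of `ℤ²`. -/
noncomputable def genR (ord : Pt → ℤ → ℤ → Prop) (p q : Pt) : Set Pt :=
  if p.1 ≤ q.1 ∧ p.2 ≤ q.2 then seg (ord p) p q else seg (ord q) q p

/-- The orders `lt` at `p` and `lt'` at `p'` are in agreement. -/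
def Agree (p p' : Pt) (lt lt' : ℤ → ℤ → Prop) : Prop :=
  ∀ a b : ℤ, max p.1 p'.1 + max p.2 p'.2 ≤ a → max p.1 p'.1 + max p.2 p'.2 ≤ b →
    (lt a b ↔ lt' a b)

/-- Two digital segments are smooth: the antidiagonal distance function is
monotonically nondecreasing or nonincreasing on its domain. -/
def SmoothPair (S S' : Set Pt) : Prop :=
  (∀ r₁ s₁ r₂ s₂ : Pt, r₁ ∈ S → s₁ ∈ S' → r₂ ∈ S → s₂ ∈ S' →
      r₁.1 + r₁.2 = s₁.1 + s₁.2 → r₂.1 + r₂.2 = s₂.1 + s₂.2 →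
      r₁.1 + r₁.2 ≤ r₂.1 + r₂.2 → r₁.1 - s₁.1 ≤ r₂.1 - s₂.1) ∨
  (∀ r₁ s₁ r₂ s₂ : Pt, r₁ ∈ S → s₁ ∈ S' → r₂ ∈ S → s₂ ∈ S' →
      r₁.1 + r₁.2 = s₁.1 + s₁.2 → r₂.1 + r₂.2 = s₂.1 + s₂.2 →
      r₁.1 + r₁.2 ≤ r₂.1 + r₂.2 → r₂.1 - s₂.1 ≤ r₁.1 - s₁.1)

/-- The waterline assignment of linear orders. -/
def waterOrd (p : Pt) : ℤ → ℤ → Prop := fun a b =>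
  if 0 ≤ p.2 then a < b
  else (p.1 ≤ a ∧ p.1 ≤ b ∧ a < b) ∨ (p.1 ≤ a ∧ b < p.1) ∨ (a < p.1 ∧ b < p.1 ∧ b < a)

/-- `p₃` has a conflicting priority with respect to `(lt,p)` and `(lt',p')`. -/
def ConflictPriority (lt lt' : ℤ → ℤ → Prop) (p p' p₃ : Pt) : Prop :=
  ∃ a b : ℤ, a ∈ Ival p p₃ ∧ a ∈ Ival p' p₃ ∧ b ∈ Ival p p₃ ∧ b ∈ Ival p' p₃ ∧
    Hmem lt p p₃ b ∧ ¬ Hmem lt p p₃ a ∧ Hmem lt' p' p₃ a ∧ ¬ Hmem lt' p' p₃ b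

/-!
Writing `C = q.1 + q.2` and `ℓ = q.1 - p.1`, the points `q` of the plane correspond bijectively to
the pairs `(C, ℓ)`. Under this substitution `Ival p q` is `[p.1 + p.2, C - 1]`, the set `H(≺, p, q)`
consists of its `ℓ` smallest elements, and `H(≺', p', q)` of the `ℓ - (p'.1 - p.1)` smallest
elements of `[p'.1 + p'.2, C - 1]`, so a bad pair is a conflict at `q` with `a` and `b` exchanged.
That `q` lies in both quadrants is automatic: if some element of `Ival p q` lies in `H(≺, p, q)` and
some other does not, then the size `q.1 - p.1` is strictly between `0` and the length
`(q.1 - p.1) + (q.2 - p.2)` of `Ival p q`.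
-/

section Rank

variable {lt : ℤ → ℤ → Prop} {J : Finset ℤ} {k x : ℤ}

theorem rankLE_pos (hx : x ∈ J) : 0 < rankLE lt J x :=
  Int.natCast_pos.mpr <|
    Finset.card_pos.mpr ⟨x, Finset.mem_filter.mpr ⟨hx, Or.inr rfl⟩⟩

theorem rankLE_le_card : rankLE lt J x ≤ J.card :=
  Int.ofNat_le.mpr (Finset.card_filter_le _ _)

theorem AmongSmallest.pos (h : AmongSmallest lt J k x) : 0 < k :=
  (rankLE_pos h.1).trans_le h.2

theorem lt_card_of_not_amongSmallest (hx : x ∈ J) (h : ¬ AmongSmallest lt J k x) :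
    k < J.card :=
  (not_le.mp fun hk => h ⟨hx, hk⟩).trans_le rankLE_le_card

end Rank

section Quadrant

variable {lt lt' : ℤ → ℤ → Prop} {p p' q : Pt} {a b : ℤ}

theorem card_Ival_of_mem (ha : a ∈ Ival p q) :
    ((Ival p q).card : ℤ) = (q.1 - p.1) + (q.2 - p.2) := by
  simp only [Ival, Finset.mem_Icc, Int.card_Icc] at ha ⊢
  omega

theorem Hmem.fst_lt (h : Hmem lt p q a) : p.1 < q.1 :=
  sub_pos.mp (AmongSmallest.pos h)

theorem snd_lt_of_not_hmem (ha : a ∈ Ival p q) (h : ¬ Hmem lt p q a) : p.2 < q.2 := by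
  have hcard := lt_card_of_not_amongSmallest ha h
  rw [card_Ival_of_mem ha] at hcard
  exact sub_pos.mp ((lt_add_iff_pos_right _).mp hcard)

theorem quad1_of_hmem_of_not_hmem (ha : Hmem lt p q a) (hb : b ∈ Ival p q)
    (hb' : ¬ Hmem lt p q b) : Quad1 p q :=
  ⟨ha.fst_lt.le, (snd_lt_of_not_hmem hb hb').le⟩

theorem ConflictPriority.quad1_left (h : ConflictPriority lt lt' p p' q) : Quad1 p q := by
  obtain ⟨a, b, ha, -, -, -, hbH, haH, -, -⟩ := h
  exact quad1_of_hmem_of_not_hmem hbH ha haH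

theorem ConflictPriority.quad1_right (h : ConflictPriority lt lt' p p' q) : Quad1 p' q := by
  obtain ⟨a, b, -, -, -, hb, -, -, haH, hbH⟩ := h
  exact quad1_of_hmem_of_not_hmem haH hb hbH

end Quadrant

section BadPair

variable {lt lt' : ℤ → ℤ → Prop} {p p' : Pt}

theorem exists_pt_eq_add_and_eq_sub (p : Pt) (C ℓ : ℤ) :
    ∃ q : Pt, C = q.1 + q.2 ∧ ℓ = q.1 - p.1 :=
  ⟨(p.1 + ℓ, C - (p.1 + ℓ)), (add_sub_cancel _ _).symm, (add_sub_cancel_left _ _).symm⟩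

theorem ConflictPriority.exists_badPair {q : Pt} (h : ConflictPriority lt lt' p p' q) :
    ∃ a b : ℤ, BadPair lt lt' p p' a b := by
  obtain ⟨hp₁, hp₂⟩ := h.quad1_left
  obtain ⟨hp'₁, hp'₂⟩ := h.quad1_right
  obtain ⟨a, b, ha, ha', hb, hb', hbH, haH, haH', hbH'⟩ := h
  have hne : b ≠ a := fun hba => haH (hba ▸ hbH)
  refine ⟨b, a, hne, q.1 + q.2, q.1 - p.1, add_le_add hp₁ hp₂, add_le_add hp'₁ hp'₂,
    hb, ha, hb', ha', hbH, haH, ?_⟩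
  rw [sub_sub_sub_cancel_right]
  exact ⟨haH', hbH'⟩

theorem BadPair.exists_conflictPriority {a b : ℤ} (h : BadPair lt lt' p p' a b) :
    ∃ q : Pt, ConflictPriority lt lt' p p' q := by
  obtain ⟨-, C, ℓ, -, -, ha, hb, ha', hb', haH, hbH, hH'⟩ := h
  obtain ⟨q, rfl, rfl⟩ := exists_pt_eq_add_and_eq_sub p C ℓ
  rw [sub_sub_sub_cancel_right] at hH'
  exact ⟨q, b, a, hb, hb', ha, ha', haH, hbH, hH'⟩

end BadPair

theorem statement3_general (p p' : Pt) (lt lt' : ℤ → ℤ → Prop) :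
    (∃ p₃ : Pt, Quad1 p p₃ ∧ Quad1 p' p₃ ∧ ConflictPriority lt lt' p p' p₃) ↔
      (∃ a b : ℤ, BadPair lt lt' p p' a b) := by
  constructor
  · rintro ⟨p₃, -, -, hconflict⟩
    exact hconflict.exists_badPair
  · rintro ⟨a, b, hbad⟩
    obtain ⟨p₃, hconflict⟩ := hbad.exists_conflictPriority
    exact ⟨p₃, hconflict.quad1_left, hconflict.quad1_right, hconflict⟩

/-- Lemma 2: there is a point `p₃ ∈ Q¹_p ∩ Q¹_{p'}` with a conflicting
priority w.r.t. `(≺,p)` and `(≺',p')` iff `(≺,p)` and `(≺',p')` have a bad pair. -/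
theorem statement3 (p p' : Pt) (hx : p.1 ≤ p'.1) (lt lt' : ℤ → ℤ → Prop)
    [IsStrictTotalOrder ℤ lt] [IsStrictTotalOrder ℤ lt'] :
    (∃ p₃ : Pt, Quad1 p p₃ ∧ Quad1 p' p₃ ∧ ConflictPriority lt lt' p p' p₃) ↔
      (∃ a b : ℤ, BadPair lt lt' p p' a b) :=
  statement3_general p p' lt lt'
end

section
/- (Lemma 3) Let p ↦ ≺_p be an assignment of a linear order on ℤ to every point p ∈ ℤ² such that for every pair of points p, p' ∈ ℤ² no two integers form a bad pair for (≺_p, p) and (≺_{p'}, p'). Then the generated nonnegative-slope digital segment system satisfies all five properties (S1)–(S5), i.e., it is a CDS. -/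
open scoped Classical

/-!
The segment from `p` to `q` is the staircase that moves horizontally at the antidiagonals in
`H(≺ₚ, p, q)`. Taking smallest elements is compatible with shrinking the interval, so the initial
pieces of a segment are themselves segments from `p`. For a piece that starts at a later point `r`,
the selections made by `≺ₚ` and `≺ᵣ` have the same size on `I(r, q)`; without a bad pair they are
nested, hence equal. This gives (S3).

Nesting also yields the extension in (S4) beyond the lower left endpoint `p`. The left and the lower
neighbour of `p` lie on one antidiagonal, and the left one selects one element more, so its
selection contains the other. If its segment to `q` misses `p`, it leaves vertically; then so does
the segment from the lower neighbour, which therefore passes through `p`.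
-/

section Rank

variable {lt : ℤ → ℤ → Prop} [IsStrictTotalOrder ℤ lt] {J J' S : Finset ℤ} {k x y : ℤ}

theorem rankLE_lt_rankLE (hy : y ∈ J) (hxy : lt x y) : rankLE lt J x < rankLE lt J y := by
  have hyx : ¬ (lt y x ∨ y = x) := by
    rintro (h | rfl)
    · exact irrefl_of lt x (trans_of lt hxy h)
    · exact irrefl_of lt y hxy
  refine Nat.cast_lt.2 <| Finset.card_lt_card <| Finset.ssubset_iff_subset_ne.2
    ⟨Finset.monotone_filter_right J fun z _ hz => Or.inl ?_, fun h => ?_⟩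
  · rcases hz with hz | rfl
    · exact trans_of lt hz hxy
    · exact hxy
  · have hy_mem : y ∈ J.filter fun z => lt z x ∨ z = x := by simp [h, hy]
    exact hyx (Finset.mem_filter.1 hy_mem).2

theorem rankLE_injOn (lt : ℤ → ℤ → Prop) [IsStrictTotalOrder ℤ lt] (J : Finset ℤ) :
    Set.InjOn (rankLE lt J) J := by
  intro x hx y hy hxy
  rcases trichotomous_of lt x y with h | h | h
  · exact absurd hxy (rankLE_lt_rankLE hy h).ne
  · exact h
  · exact absurd hxy (rankLE_lt_rankLE hx h).ne'

theorem image_rankLE (lt : ℤ → ℤ → Prop) [IsStrictTotalOrder ℤ lt] (J : Finset ℤ) :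
    J.image (rankLE lt J) = Finset.Icc 1 (J.card : ℤ) := by
  refine Finset.eq_of_subset_of_card_le (Finset.image_subset_iff.2 fun x hx => ?_) ?_
  · have hpos : 0 < (J.filter fun y => lt y x ∨ y = x).card :=
      Finset.card_pos.2 ⟨x, by simp [hx]⟩
    exact Finset.mem_Icc.2 ⟨by unfold rankLE; omega, Nat.cast_le.2 (Finset.card_filter_le _ _)⟩
  · rw [Finset.card_image_of_injOn (rankLE_injOn lt J), Int.card_Icc]
    omega

theorem card_filter_amongSmallest (hk : 0 ≤ k) (hkJ : k ≤ J.card) :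
    ((J.filter (AmongSmallest lt J k)).card : ℤ) = k := by
  have hfilter : J.filter (AmongSmallest lt J k) = J.filter fun x => rankLE lt J x ≤ k :=
    Finset.filter_congr fun x hx => and_iff_right hx
  have himage : (J.filter (AmongSmallest lt J k)).image (rankLE lt J) = Finset.Icc 1 k := by
    rw [hfilter, ← Finset.filter_image (p := (· ≤ k)), image_rankLE]
    ext z
    simp only [Finset.mem_filter, Finset.mem_Icc]
    omega
  rw [← Finset.card_image_of_injOn ((rankLE_injOn lt J).mono (Finset.filter_subset _ J)), himage,
    Int.card_Icc]
  omega

theorem AmongSmallest.of_lt (hx : AmongSmallest lt J k x) (hy : y ∈ J) (hyx : lt y x) :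
    AmongSmallest lt J k y :=
  ⟨hy, (rankLE_lt_rankLE hx.1 hyx).le.trans hx.2⟩

theorem amongSmallest_card_iff_mem (hSJ : S ⊆ J)
    (hlower : ∀ x ∈ S, ∀ y ∈ J, lt y x → y ∈ S) (hx : x ∈ J) :
    AmongSmallest lt J S.card x ↔ x ∈ S := by
  refine ⟨fun h => by_contra fun hxS => ?_, fun hxS => ⟨hx, ?_⟩⟩
  · have hinsert : insert x S ⊆ J.filter fun y => lt y x ∨ y = x := by
      intro y hy
      rcases Finset.mem_insert.1 hy with rfl | hyS
      · simp [hx]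
      · have hxy : ¬ lt x y := fun hxy => hxS (hlower y hyS x hx hxy)
        have := trichotomous_of lt y x
        exact Finset.mem_filter.2 ⟨hSJ hyS, by tauto⟩
    have hcard := Finset.card_le_card hinsert
    rw [Finset.card_insert_of_notMem hxS] at hcard
    exact absurd (Nat.cast_le.1 h.2) (by omega)
  · refine Nat.cast_le.2 (Finset.card_le_card fun y hy => ?_)
    obtain ⟨hyJ, hyx | rfl⟩ := Finset.mem_filter.1 hy
    · exact hlower x hxS y hyJ hyx
    · exact hxS

theorem amongSmallest_card_filter_iff (hJ : J' ⊆ J) (hx : x ∈ J') :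
    AmongSmallest lt J' (J'.filter (AmongSmallest lt J k)).card x ↔ AmongSmallest lt J k x := by
  rw [amongSmallest_card_iff_mem (Finset.filter_subset _ J') _ hx, Finset.mem_filter,
    and_iff_right hx]
  intro y hy z hz hzy
  exact Finset.mem_filter.2 ⟨hz, (Finset.mem_filter.1 hy).2.of_lt (hJ hz) hzy⟩

end Rank

section StepCount

/-- The number of integers in `[u, v)` satisfying `P`. If `P` selects the antidiagonals at which a
staircase moves horizontally, this is its horizontal displacement between the antidiagonals `u`
and `v`. -/
noncomputable def stepCount (P : ℤ → Prop) (u v : ℤ) : ℤ :=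
  ((Finset.Ico u v).filter P).card

variable {P Q : ℤ → Prop} {u v w : ℤ}

theorem stepCount_self (P : ℤ → Prop) (u : ℤ) : stepCount P u u = 0 := by
  simp [stepCount]

theorem stepCount_nonneg (P : ℤ → Prop) (u v : ℤ) : 0 ≤ stepCount P u v :=
  Nat.cast_nonneg _

theorem stepCount_le_sub (P : ℤ → Prop) (huv : u ≤ v) : stepCount P u v ≤ v - u := by
  have h := Finset.card_filter_le (Finset.Ico u v) P
  rw [Int.card_Ico] at h
  unfold stepCount
  omega

theorem stepCount_add_stepCount (P : ℤ → Prop) (huv : u ≤ v) (hvw : v ≤ w) :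
    stepCount P u v + stepCount P v w = stepCount P u w := by
  unfold stepCount
  rw [← Finset.Ico_union_Ico_eq_Ico huv hvw, Finset.filter_union, Finset.card_union_of_disjoint
    (Finset.disjoint_filter_filter (Finset.Ico_disjoint_Ico_consecutive u v w)), Nat.cast_add]

theorem stepCount_add_one (P : ℤ → Prop) (u : ℤ) :
    stepCount P u (u + 1) = if P u then 1 else 0 := by
  have hIco : Finset.Ico u (u + 1) = {u} := by
    ext x
    simp only [Finset.mem_Ico, Finset.mem_singleton]
    omega
  rw [stepCount, hIco, Finset.filter_singleton]
  split_ifs <;> simp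

theorem stepCount_congr (h : ∀ x, u ≤ x → x < v → (P x ↔ Q x)) :
    stepCount P u v = stepCount Q u v := by
  unfold stepCount
  rw [Finset.filter_congr fun x hx => h x (Finset.mem_Ico.1 hx).1 (Finset.mem_Ico.1 hx).2]

end StepCount

section Staircase

/-- The staircase from `p` that leaves the antidiagonal `a` horizontally if `P a` holds and
vertically otherwise, indexed by the number of steps taken. -/
noncomputable def staircase (P : ℤ → Prop) (p : Pt) (i : ℕ) : Pt :=
  (p.1 + stepCount P (p.1 + p.2) (p.1 + p.2 + i),
    p.2 + (i - stepCount P (p.1 + p.2) (p.1 + p.2 + i)))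

theorem staircase_fst_add_snd (P : ℤ → Prop) (p : Pt) (i : ℕ) :
    (staircase P p i).1 + (staircase P p i).2 = p.1 + p.2 + i := by
  simp only [staircase]
  ring

theorem staircase_eq_iff {P : ℤ → Prop} {p r : Pt} {i : ℕ} :
    staircase P p i = r ↔ p.1 + p.2 + i = r.1 + r.2 ∧
      r.1 - p.1 = stepCount P (p.1 + p.2) (r.1 + r.2) := by
  constructor
  · rintro rfl
    rw [staircase_fst_add_snd]
    exact ⟨rfl, by simp [staircase]⟩
  · rintro ⟨hi, hr⟩
    ext <;> simp only [staircase, hi] <;> omega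

theorem gridAdj_staircase_succ (P : ℤ → Prop) (p : Pt) (i : ℕ) :
    GridAdj (staircase P p i) (staircase P p (i + 1)) := by
  have hsplit := stepCount_add_stepCount P (u := p.1 + p.2) (v := p.1 + p.2 + i)
    (w := p.1 + p.2 + i + 1) (by omega) (by omega)
  rw [stepCount_add_one] at hsplit
  simp only [GridAdj, staircase, Nat.cast_add, Nat.cast_one, ← add_assoc, ← hsplit]
  split_ifs <;> ring_nf <;> norm_num

theorem isGridPath_staircase (P : ℤ → Prop) (p : Pt) (n : ℕ) :
    IsGridPath {r | ∃ i, i ≤ n ∧ staircase P p i = r} p (staircase P p n) := by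
  refine ⟨n, staircase P p, ?_, rfl, fun i _ => gridAdj_staircase_succ P p i, ?_, rfl⟩
  · simp [staircase_eq_iff, stepCount_self]
  · intro i j _ _ hij
    have hi := staircase_fst_add_snd P p i
    rw [hij, staircase_fst_add_snd] at hi
    omega

theorem IsGridPath.symm {S : Set Pt} {p q : Pt} (h : IsGridPath S p q) : IsGridPath S q p := by
  obtain ⟨n, f, hf0, hfn, hadj, hinj, rfl⟩ := h
  refine ⟨n, fun i => f (n - i), by simpa, by simpa, fun i hi => ?_, fun i j hi hj hij => ?_, ?_⟩
  · have hstep := hadj (n - (i + 1)) (by omega)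
    rw [show n - (i + 1) + 1 = n - i by omega] at hstep
    unfold GridAdj at hstep ⊢
    rwa [abs_sub_comm (f (n - i)).1, abs_sub_comm (f (n - i)).2]
  · have := hinj (n - i) (n - j) (by omega) (by omega) hij
    omega
  · ext r
    constructor
    · rintro ⟨i, hi, rfl⟩
      exact ⟨n - i, by omega, congrArg f (by omega)⟩
    · rintro ⟨i, hi, rfl⟩
      exact ⟨n - i, by omega, rfl⟩

end Staircase

section Segment

variable {lt : ℤ → ℤ → Prop} {p q r s : Pt} {x : ℤ}

theorem Ival_eq_Ico (p q : Pt) : Ival p q = Finset.Ico (p.1 + p.2) (q.1 + q.2) :=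
  Finset.Icc_sub_one_right_eq_Ico _ _

theorem Quad1.trans (hpr : Quad1 p r) (hrq : Quad1 r q) : Quad1 p q :=
  ⟨hpr.1.trans hrq.1, hpr.2.trans hrq.2⟩

theorem Quad1.antidiagonal_le (hpq : Quad1 p q) : p.1 + p.2 ≤ q.1 + q.2 :=
  add_le_add hpq.1 hpq.2

theorem quad1_left_of_mem_seg (hr : r ∈ seg lt p q) : Quad1 p r :=
  ⟨hr.1, hr.2.2.1⟩

theorem quad1_right_of_mem_seg (hr : r ∈ seg lt p q) : Quad1 r q :=
  ⟨hr.2.1, hr.2.2.2.1⟩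

theorem fst_sub_fst_of_mem_seg (hr : r ∈ seg lt p q) :
    r.1 - p.1 = stepCount (Hmem lt p q) (p.1 + p.2) (r.1 + r.2) := by
  rw [stepCount, ← Finset.Icc_sub_one_right_eq_Ico]
  exact hr.2.2.2.2.2.2

variable [IsStrictTotalOrder ℤ lt]

theorem stepCount_hmem (hpq : Quad1 p q) :
    stepCount (Hmem lt p q) (p.1 + p.2) (q.1 + q.2) = q.1 - p.1 := by
  obtain ⟨hx, hy⟩ := hpq
  rw [stepCount, ← Ival_eq_Ico]
  refine card_filter_amongSmallest (by omega) ?_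
  rw [Ival_eq_Ico, Int.card_Ico]
  omega

theorem mem_seg_iff (hpq : Quad1 p q) :
    r ∈ seg lt p q ↔ p.1 + p.2 ≤ r.1 + r.2 ∧ r.1 + r.2 ≤ q.1 + q.2 ∧
      r.1 - p.1 = stepCount (Hmem lt p q) (p.1 + p.2) (r.1 + r.2) := by
  constructor
  · exact fun hr => ⟨(quad1_left_of_mem_seg hr).antidiagonal_le,
      (quad1_right_of_mem_seg hr).antidiagonal_le, fst_sub_fst_of_mem_seg hr⟩
  · rintro ⟨hpr, hrq, hr⟩
    have htotal := stepCount_hmem (lt := lt) hpq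
    rw [← stepCount_add_stepCount _ hpr hrq] at htotal
    have hpr_le := stepCount_le_sub (Hmem lt p q) hpr
    have hrq_le := stepCount_le_sub (Hmem lt p q) hrq
    have hpr_nonneg := stepCount_nonneg (Hmem lt p q) (p.1 + p.2) (r.1 + r.2)
    have hrq_nonneg := stepCount_nonneg (Hmem lt p q) (r.1 + r.2) (q.1 + q.2)
    refine ⟨by omega, by omega, by omega, by omega, hpr, hrq, ?_⟩
    rw [hr, stepCount, Finset.Icc_sub_one_right_eq_Ico]

theorem isGridPath_seg (hpq : Quad1 p q) : IsGridPath (seg lt p q) p q := by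
  obtain ⟨n, hn⟩ := Int.le.dest hpq.antidiagonal_le
  have hseg : seg lt p q = {r | ∃ i, i ≤ n ∧ staircase (Hmem lt p q) p i = r} := by
    ext r
    simp only [mem_seg_iff hpq, Set.mem_ofPred_eq, staircase_eq_iff]
    constructor
    · rintro ⟨hpr, hrq, hr⟩
      exact ⟨(r.1 + r.2 - (p.1 + p.2)).toNat, by omega, by omega, hr⟩
    · rintro ⟨i, hi, hir, hr⟩
      exact ⟨by omega, by omega, hr⟩
  have hend : staircase (Hmem lt p q) p n = q :=
    staircase_eq_iff.2 ⟨hn, (stepCount_hmem hpq).symm⟩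
  have hpath := isGridPath_staircase (Hmem lt p q) p n
  rwa [← hseg, hend] at hpath

theorem hmem_iff_of_mem_seg (hs : s ∈ seg lt p q) (hx : x ∈ Ival p s) :
    Hmem lt p s x ↔ Hmem lt p q x := by
  have hsub : Ival p s ⊆ Ival p q :=
    Finset.Icc_subset_Icc_right (Int.sub_le_sub_right (quad1_right_of_mem_seg hs).antidiagonal_le 1)
  have hcard : s.1 - p.1 = ((Ival p s).filter (Hmem lt p q)).card := by
    rw [fst_sub_fst_of_mem_seg hs, stepCount, Ival_eq_Ico]
  rw [Hmem, hcard]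
  exact amongSmallest_card_filter_iff hsub hx

theorem mem_seg_iff_of_mem_seg (hs : s ∈ seg lt p q) (hrs : r.1 + r.2 ≤ s.1 + s.2) :
    r ∈ seg lt p s ↔ r ∈ seg lt p q := by
  have hps := quad1_left_of_mem_seg hs
  have hsq := quad1_right_of_mem_seg hs
  have hcount : stepCount (Hmem lt p s) (p.1 + p.2) (r.1 + r.2) =
      stepCount (Hmem lt p q) (p.1 + p.2) (r.1 + r.2) :=
    stepCount_congr fun x hpx hxr =>
      hmem_iff_of_mem_seg hs (by rw [Ival_eq_Ico, Finset.mem_Ico]; omega)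
  rw [mem_seg_iff hps, mem_seg_iff (hps.trans hsq), hcount]
  exact and_congr_right fun _ => and_congr_left fun _ =>
    iff_of_true hrs (hrs.trans hsq.antidiagonal_le)

theorem seg_subset_seg_of_right_mem (hs : s ∈ seg lt p q) : seg lt p s ⊆ seg lt p q :=
  fun _ hr =>
    (mem_seg_iff_of_mem_seg hs (quad1_right_of_mem_seg hr).antidiagonal_le).1 hr

theorem mem_seg_fst_add_one_iff (hpq : Quad1 p q) :
    q ∈ seg lt p (q.1 + 1, q.2) ↔ Hmem lt p (q.1 + 1, q.2) (q.1 + q.2) := by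
  obtain ⟨hx, hy⟩ := hpq
  have hquad : Quad1 p (q.1 + 1, q.2) := ⟨by simp only; omega, hy⟩
  have htotal := stepCount_hmem (lt := lt) hquad
  simp only [add_right_comm q.1 1 q.2] at htotal
  rw [← stepCount_add_stepCount _ (v := q.1 + q.2) (by omega) (by omega),
    stepCount_add_one] at htotal
  rw [mem_seg_iff hquad]
  split_ifs at htotal with h
  · simp only [h, iff_true]
    omega
  · simp only [h, iff_false]
    omega

theorem mem_seg_snd_add_one_iff (hpq : Quad1 p q) :
    q ∈ seg lt p (q.1, q.2 + 1) ↔ ¬ Hmem lt p (q.1, q.2 + 1) (q.1 + q.2) := by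
  obtain ⟨hx, hy⟩ := hpq
  have hquad : Quad1 p (q.1, q.2 + 1) := ⟨hx, by simp only; omega⟩
  have htotal := stepCount_hmem (lt := lt) hquad
  simp only [← add_assoc] at htotal
  rw [← stepCount_add_stepCount _ (v := q.1 + q.2) (by omega) (by omega),
    stepCount_add_one] at htotal
  rw [mem_seg_iff hquad]
  split_ifs at htotal with h
  · simp only [h, not_true, iff_false]
    omega
  · simp only [h, not_false_iff, iff_true]
    omega

theorem exists_mem_seg_of_quad1 (lt : ℤ → ℤ → Prop) [IsStrictTotalOrder ℤ lt] (hpq : Quad1 p q) :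
    ∃ r : Pt, Quad1 q r ∧ q.1 + q.2 < r.1 + r.2 ∧ q ∈ seg lt p r := by
  by_cases hmem : Hmem lt p (q.1, q.2 + 1) (q.1 + q.2)
  · have hhoriz : Hmem lt p (q.1 + 1, q.2) (q.1 + q.2) := by
      have hIval : Ival p (q.1, q.2 + 1) = Ival p (q.1 + 1, q.2) := by
        simp only [Ival, add_right_comm q.1 1 q.2, add_assoc]
      rw [Hmem, hIval] at hmem
      exact ⟨hmem.1, hmem.2.trans (by simp only; omega)⟩
    exact ⟨(q.1 + 1, q.2), ⟨by simp, le_rfl⟩, by simp only; omega,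
      (mem_seg_fst_add_one_iff hpq).2 hhoriz⟩
  · exact ⟨(q.1, q.2 + 1), ⟨le_rfl, by simp⟩, by simp only; omega,
      (mem_seg_snd_add_one_iff hpq).2 hmem⟩

theorem fst_add_one_mem_seg_iff (hpq : Quad1 (p.1 + 1, p.2) q) :
    (p.1 + 1, p.2) ∈ seg lt p q ↔ Hmem lt p q (p.1 + p.2) := by
  obtain ⟨hx, hy⟩ := hpq
  simp only at hx hy
  rw [mem_seg_iff ⟨by omega, hy⟩]
  simp only [add_right_comm p.1 1 p.2, stepCount_add_one]
  split_ifs with h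
  · simp only [h, iff_true]
    omega
  · simp only [h, iff_false]
    omega

theorem snd_add_one_mem_seg_iff (hpq : Quad1 (p.1, p.2 + 1) q) :
    (p.1, p.2 + 1) ∈ seg lt p q ↔ ¬ Hmem lt p q (p.1 + p.2) := by
  obtain ⟨hx, hy⟩ := hpq
  simp only at hx hy
  rw [mem_seg_iff ⟨hx, by omega⟩]
  simp only [← add_assoc, stepCount_add_one]
  split_ifs with h
  · simp only [h, not_true, iff_false]
    omega
  · simp only [h, not_false_iff, iff_true]
    omega

end Segment

section Conflict

variable {lt lt' : ℤ → ℤ → Prop} {p p' q r s : Pt} {x : ℤ}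

theorem exists_badPair_of_conflictPriority (h : ConflictPriority lt lt' p p' q) :
    ∃ a b, BadPair lt lt' p p' a b := by
  obtain ⟨a, b, ha, ha', hb, hb', hpb, hpa, hp'a, hp'b⟩ := h
  have hle := Finset.mem_Icc.1 ha
  have hle' := Finset.mem_Icc.1 ha'
  have hshift : q.1 - p.1 - (p'.1 - p.1) = q.1 - p'.1 := by ring
  refine ⟨b, a, ?_, q.1 + q.2, q.1 - p.1, by omega, by omega, hb, ha, hb', ha', hpb, hpa, ?_⟩
  · rintro rfl
    exact hpa hpb
  · rw [hshift]
    exact ⟨hp'a, hp'b⟩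

theorem filter_hmem_subset_of_card_le (hconf : ¬ ConflictPriority lt lt' p p' q)
    (hpp' : p.1 + p.2 ≤ p'.1 + p'.2)
    (hcard : ((Ival p' q).filter (Hmem lt' p' q)).card ≤
      ((Ival p' q).filter (Hmem lt p q)).card) :
    (Ival p' q).filter (Hmem lt' p' q) ⊆ (Ival p' q).filter (Hmem lt p q) := by
  have hIval : Ival p' q ⊆ Ival p q := Finset.Icc_subset_Icc_left hpp'
  by_contra hsub
  have hsub' : ¬ (Ival p' q).filter (Hmem lt p q) ⊆ (Ival p' q).filter (Hmem lt' p' q) :=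
    fun h => hsub (Finset.eq_of_subset_of_card_le h hcard).ge
  obtain ⟨a, ha, ha'⟩ := Finset.not_subset.1 hsub
  obtain ⟨b, hb, hb'⟩ := Finset.not_subset.1 hsub'
  rw [Finset.mem_filter] at ha hb
  exact hconf ⟨a, b, hIval ha.1, ha.1, hIval hb.1, hb.1, hb.2,
    fun h => ha' (Finset.mem_filter.2 ⟨ha.1, h⟩), ha.2,
    fun h => hb' (Finset.mem_filter.2 ⟨hb.1, h⟩)⟩

variable [IsStrictTotalOrder ℤ lt] [IsStrictTotalOrder ℤ lt']

theorem hmem_iff_of_not_conflictPriority (hr : r ∈ seg lt p q)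
    (hconf : ¬ ConflictPriority lt lt' p r q) (hx : x ∈ Ival r q) :
    Hmem lt' r q x ↔ Hmem lt p q x := by
  have hpr := quad1_left_of_mem_seg hr
  have hrq := quad1_right_of_mem_seg hr
  have hcount : stepCount (Hmem lt' r q) (r.1 + r.2) (q.1 + q.2) =
      stepCount (Hmem lt p q) (r.1 + r.2) (q.1 + q.2) := by
    have hsplit := stepCount_add_stepCount (Hmem lt p q) hpr.antidiagonal_le
      hrq.antidiagonal_le
    rw [stepCount_hmem (hpr.trans hrq), ← fst_sub_fst_of_mem_seg hr] at hsplit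
    rw [stepCount_hmem hrq]
    omega
  rw [stepCount, stepCount, Nat.cast_inj, ← Ival_eq_Ico] at hcount
  have heq := Finset.eq_of_subset_of_card_le
    (filter_hmem_subset_of_card_le hconf hpr.antidiagonal_le hcount.le) hcount.ge
  exact Finset.filter_inj'.1 heq hx

theorem seg_subset_seg_of_left_mem (hr : r ∈ seg lt p q)
    (hconf : ¬ ConflictPriority lt lt' p r q) : seg lt' r q ⊆ seg lt p q := by
  intro t ht
  have hpr := quad1_left_of_mem_seg hr
  have hrt := quad1_left_of_mem_seg ht
  have htq := quad1_right_of_mem_seg ht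
  have htq_le := htq.antidiagonal_le
  have hcount : stepCount (Hmem lt' r q) (r.1 + r.2) (t.1 + t.2) =
      stepCount (Hmem lt p q) (r.1 + r.2) (t.1 + t.2) :=
    stepCount_congr fun x hrx hxt =>
      hmem_iff_of_not_conflictPriority hr hconf (by rw [Ival_eq_Ico, Finset.mem_Ico]; omega)
  have hsplit := stepCount_add_stepCount (Hmem lt p q) hpr.antidiagonal_le
    hrt.antidiagonal_le
  rw [← fst_sub_fst_of_mem_seg hr, ← hcount, ← fst_sub_fst_of_mem_seg ht] at hsplit
  rw [mem_seg_iff ((hpr.trans hrt).trans htq)]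
  exact ⟨(hpr.trans hrt).antidiagonal_le, htq_le, by omega⟩

theorem seg_subset_seg_of_mem (hr : r ∈ seg lt p q) (hs : s ∈ seg lt p q) (hrs : Quad1 r s)
    (hconf : ¬ ConflictPriority lt lt' p r s) : seg lt' r s ⊆ seg lt p q :=
  have hr' : r ∈ seg lt p s := (mem_seg_iff_of_mem_seg hs hrs.antidiagonal_le).2 hr
  (seg_subset_seg_of_left_mem hr' hconf).trans (seg_subset_seg_of_right_mem hs)

theorem hmem_of_hmem_of_same_antidiagonal (hconf : ¬ ConflictPriority lt lt' p p' q)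
    (hlevel : p.1 + p.2 = p'.1 + p'.2) (hfst : p.1 ≤ p'.1) (hpq : Quad1 p q) (hp'q : Quad1 p' q)
    (h : Hmem lt' p' q x) : Hmem lt p q x := by
  have hcount := stepCount_hmem (lt := lt) hpq
  have hcount' := stepCount_hmem (lt := lt') hp'q
  rw [hlevel, stepCount, ← Ival_eq_Ico] at hcount
  rw [stepCount, ← Ival_eq_Ico] at hcount'
  have hsub := filter_hmem_subset_of_card_le hconf hlevel.le (by omega)
  exact (Finset.mem_filter.1 (hsub (Finset.mem_filter.2 ⟨h.1, h⟩))).2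

theorem exists_mem_seg_ord_of_quad1 {ord : Pt → ℤ → ℤ → Prop}
    [∀ p, IsStrictTotalOrder ℤ (ord p)] (hpq : Quad1 p q)
    (hconf : ¬ ConflictPriority (ord (p.1 - 1, p.2)) (ord (p.1, p.2 - 1))
      (p.1 - 1, p.2) (p.1, p.2 - 1) q) :
    ∃ r : Pt, Quad1 r p ∧ r.1 + r.2 < p.1 + p.2 ∧ p ∈ seg (ord r) r q := by
  have hleft : Quad1 (p.1 - 1, p.2) q := ⟨(sub_one_lt p.1).le.trans hpq.1, hpq.2⟩
  have hbelow : Quad1 (p.1, p.2 - 1) q := ⟨hpq.1, (sub_one_lt p.2).le.trans hpq.2⟩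
  by_cases hhoriz : Hmem (ord (p.1 - 1, p.2)) (p.1 - 1, p.2) q (p.1 - 1 + p.2)
  · refine ⟨(p.1 - 1, p.2), ⟨by simp, le_rfl⟩, by simp only; omega, ?_⟩
    simpa using (fst_add_one_mem_seg_iff (by simpa using hpq)).2 hhoriz
  · have hvert : ¬ Hmem (ord (p.1, p.2 - 1)) (p.1, p.2 - 1) q (p.1 + (p.2 - 1)) := fun h =>
      hhoriz <| (by ring : p.1 - 1 + p.2 = p.1 + (p.2 - 1)) ▸
        hmem_of_hmem_of_same_antidiagonal hconf (by ring) (sub_one_lt p.1).le hleft hbelow h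
    refine ⟨(p.1, p.2 - 1), ⟨le_rfl, by simp⟩, by simp only; omega, ?_⟩
    simpa using (snd_add_one_mem_seg_iff (by simpa using hpq)).2 hvert

end Conflict

section Generated

variable {ord : Pt → ℤ → ℤ → Prop} {p q r s : Pt}

theorem genR_of_quad1 (ord : Pt → ℤ → ℤ → Prop) (hpq : Quad1 p q) :
    genR ord p q = seg (ord p) p q :=
  if_pos hpq

theorem genR_comm (ord : Pt → ℤ → ℤ → Prop) (hpq : NonnegPair p q) :
    genR ord p q = genR ord q p := by
  unfold genR
  split_ifs with h h'
  · rw [Prod.ext (h.1.antisymm h'.1) (h.2.antisymm h'.2)]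
  · rfl
  · rfl
  · exact absurd hpq (by unfold NonnegPair; tauto)

theorem fst_eq_of_mem_genR (h : p.1 = q.1) (hr : r ∈ genR ord p q) : r.1 = p.1 := by
  unfold genR at hr
  split_ifs at hr
  · exact ((quad1_right_of_mem_seg hr).1.trans_eq h.symm).antisymm (quad1_left_of_mem_seg hr).1
  · exact (quad1_right_of_mem_seg hr).1.antisymm (h.trans_le (quad1_left_of_mem_seg hr).1)

theorem snd_eq_of_mem_genR (h : p.2 = q.2) (hr : r ∈ genR ord p q) : r.2 = p.2 := by
  unfold genR at hr
  split_ifs at hr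
  · exact ((quad1_right_of_mem_seg hr).2.trans_eq h.symm).antisymm (quad1_left_of_mem_seg hr).2
  · exact (quad1_right_of_mem_seg hr).2.antisymm (h.trans_le (quad1_left_of_mem_seg hr).2)

variable [∀ p, IsStrictTotalOrder ℤ (ord p)]

theorem isGridPath_genR (hpq : NonnegPair p q) : IsGridPath (genR ord p q) p q := by
  rcases hpq with h | h
  · rw [genR_of_quad1 ord h]
    exact isGridPath_seg h
  · rw [genR_comm ord (Or.inr h), genR_of_quad1 ord h]
    exact (isGridPath_seg h).symm

theorem genR_subset_seg_of_mem (hconf : ∀ r s, Quad1 p r → ¬ ConflictPriority (ord p) (ord r) p r s)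
    (hr : r ∈ seg (ord p) p q) (hs : s ∈ seg (ord p) p q) (hrs : NonnegPair r s) :
    genR ord r s ⊆ seg (ord p) p q := by
  rcases hrs with h | h
  · rw [genR_of_quad1 ord h]
    exact seg_subset_seg_of_mem hr hs h (hconf r s (quad1_left_of_mem_seg hr))
  · rw [genR_comm ord (Or.inr h), genR_of_quad1 ord h]
    exact seg_subset_seg_of_mem hs hr h (hconf s r (quad1_left_of_mem_seg hs))

theorem genR_subset_genR_of_mem
    (hconf : ∀ p p' q, Quad1 p p' → ¬ ConflictPriority (ord p) (ord p') p p' q)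
    (hpq : NonnegPair p q) (hr : r ∈ genR ord p q) (hs : s ∈ genR ord p q)
    (hrs : NonnegPair r s) : genR ord r s ⊆ genR ord p q := by
  rcases hpq with h | h
  · rw [genR_of_quad1 ord h] at hr hs ⊢
    exact genR_subset_seg_of_mem (hconf p) hr hs hrs
  · rw [genR_comm ord (Or.inr h), genR_of_quad1 ord h] at hr hs ⊢
    exact genR_subset_seg_of_mem (hconf q) hr hs hrs

theorem exists_genR_subset_genR
    (hconf : ∀ p p' q, p.1 ≤ p'.1 → ¬ ConflictPriority (ord p) (ord p') p p' q)
    (hpq : NonnegPair p q) :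
    ∃ r, r ∉ genR ord p q ∧ NonnegPair p r ∧ genR ord p q ⊆ genR ord p r := by
  rcases hpq with h | h
  · obtain ⟨r, hqr, hlevel, hq⟩ := exists_mem_seg_of_quad1 (ord p) h
    have hpr : Quad1 p r := Quad1.trans h hqr
    rw [genR_of_quad1 ord h]
    refine ⟨r, fun hr => hlevel.not_ge (quad1_right_of_mem_seg hr).antidiagonal_le,
      Or.inl hpr, ?_⟩
    rw [genR_of_quad1 ord hpr]
    exact seg_subset_seg_of_right_mem hq
  · obtain ⟨r, hrq, hlevel, hq⟩ :=
      exists_mem_seg_ord_of_quad1 h (hconf _ _ p (sub_one_lt q.1).le)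
    have hrp : Quad1 r p := hrq.trans h
    rw [genR_comm ord (Or.inr h), genR_of_quad1 ord h]
    refine ⟨r, fun hr => hlevel.not_ge (quad1_left_of_mem_seg hr).antidiagonal_le,
      Or.inr hrp, ?_⟩
    rw [genR_comm ord (Or.inr hrp), genR_of_quad1 ord hrp]
    exact seg_subset_seg_of_left_mem hq (hconf r q p hrq.1)

end Generated

/-- Lemma 3: if no pair of assigned total orders has a bad pair, then the
generated nonnegative-slope digital segment system satisfies (S1)-(S5), i.e. is a CDS. -/
theorem statement6 (ord : Pt → ℤ → ℤ → Prop)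
    (hord : ∀ p : Pt, IsStrictTotalOrder ℤ (ord p))
    (hnb : ∀ p p' : Pt, p.1 ≤ p'.1 → ∀ a b : ℤ, ¬ BadPair (ord p) (ord p') p p' a b) :
    IsCDS (genR ord) := by
  have hconf : ∀ p p' q, p.1 ≤ p'.1 → ¬ ConflictPriority (ord p) (ord p') p p' q := by
    intro p p' q hpp' h
    obtain ⟨a, b, hab⟩ := exists_badPair_of_conflictPriority h
    exact hnb p p' hpp' a b hab
  intro p q hpq
  have hS1 : IsGridPath (genR ord p q) p q := isGridPath_genR hpq
  have hS2 : genR ord p q = genR ord q p := genR_comm ord hpq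
  have hS3 : ∀ r s : Pt, r ∈ genR ord p q → s ∈ genR ord p q → NonnegPair r s →
      genR ord r s ⊆ genR ord p q := fun _ _ =>
    genR_subset_genR_of_mem (fun p p' q hpp' => hconf p p' q hpp'.1) hpq
  have hS4 : ∃ r, r ∉ genR ord p q ∧ NonnegPair p r ∧ genR ord p q ⊆ genR ord p r :=
    exists_genR_subset_genR hconf hpq
  exact ⟨hS1, hS2, hS3, hS4, fun h _ => fst_eq_of_mem_genR h, fun h _ => snd_eq_of_mem_genR h⟩
end
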